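/- Let ((f_n),(τ_n)) and ((g_n),(ω_n)) be two Parseval p-ASFs for the Banach space X (i.e. S_{f,τ} = S_{g,ω} = I_X) which are orthogonal, meaning θ_τ θ_g = 0 and θ_ω θ_f = 0. If A, B, C, D : X → X are bounded linear operators with C∘A + D∘B = I_X, then the pair ((f_n∘A + g_n∘B)_{n∈ℕ}, (C τ_n + D ω_n)_{n∈ℕ}) is a Parseval p-ASF for X; in particular, for scalars a, b, c, d with c·a + d·b = 1, the pair ((a f_n + b g_n)_n, (c τ_n + d ω_n)_n) is a Parseval p-ASF for X. -/

import Mathlib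

open Filter
open scoped ENNReal

variable {𝕂 : Type*} [RCLike 𝕂] {X : Type*} [NormedAddCommGroup X] [NormedSpace 𝕂 X]
  [CompleteSpace X]

/-- A pair `((f_n), (τ_n))` is a Parseval (simple) p-approximate Schauder frame for `X`: the
analysis operator `θ_f` and the synthesis operator `θ_τ` are well-defined bounded linear
operators and the frame operator `θ_τ θ_f` equals the identity `I_X`. -/
def IsParsevalPASF (p : ℝ≥0∞) [Fact (1 ≤ p)] (f : ℕ → X →L[𝕂] 𝕂) (τ : ℕ → X) : Prop :=
  ∃ (θf : X →L[𝕂] lp (fun _ : ℕ => 𝕂) p) (θτ : lp (fun _ : ℕ => 𝕂) p →L[𝕂] X),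
    (∀ (x : X) (n : ℕ), θf x n = f n x) ∧
    (∀ a : lp (fun _ : ℕ => 𝕂) p,
      Tendsto (fun N => ∑ n ∈ Finset.range N, a n • τ n) atTop (nhds (θτ a))) ∧
    θτ.comp θf = ContinuousLinearMap.id 𝕂 X

/-!
Orthogonality makes the cross terms `θ_τ θ_g` and `θ_ω θ_f` vanish in
`(C θ_τ + D θ_ω) (θ_f A + θ_g B)`, and the Parseval identities turn the two remaining terms into
`C A + D B = I`.
-/

section OperatorAlgebra

variable {R E F G H L : Type*} [Semiring R]
  [AddCommMonoid E] [Module R E] [TopologicalSpace E]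
  [AddCommMonoid F] [Module R F] [TopologicalSpace F]
  [AddCommMonoid G] [Module R G] [TopologicalSpace G]
  [AddCommMonoid H] [Module R H] [TopologicalSpace H] [ContinuousAdd H]
  [AddCommMonoid L] [Module R L] [TopologicalSpace L] [ContinuousAdd L]

theorem add_comp_add_of_orthogonal_leftInverses
    {S₁ : L →L[R] E} {S₂ : L →L[R] F} {T₁ : E →L[R] L} {T₂ : F →L[R] L}
    (h₁₁ : S₁.comp T₁ = ContinuousLinearMap.id R E)
    (h₂₂ : S₂.comp T₂ = ContinuousLinearMap.id R F)
    (h₁₂ : S₁.comp T₂ = 0) (h₂₁ : S₂.comp T₁ = 0)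
    (A : G →L[R] E) (B : G →L[R] F) (C : E →L[R] H) (D : F →L[R] H) :
    (C.comp S₁ + D.comp S₂).comp (T₁.comp A + T₂.comp B) = C.comp A + D.comp B := by
  ext x
  have h₁₁x : S₁ (T₁ (A x)) = A x := DFunLike.congr_fun h₁₁ (A x)
  have h₂₂x : S₂ (T₂ (B x)) = B x := DFunLike.congr_fun h₂₂ (B x)
  have h₁₂x : S₁ (T₂ (B x)) = 0 := DFunLike.congr_fun h₁₂ (B x)
  have h₂₁x : S₂ (T₁ (A x)) = 0 := DFunLike.congr_fun h₂₁ (A x)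
  simp [h₁₁x, h₂₂x, h₁₂x, h₂₁x]

end OperatorAlgebra

section AnalysisSynthesis

variable {𝕜 ι E F : Type*} [NormedField 𝕜] {p : ℝ≥0∞} [Fact (1 ≤ p)]
  [AddCommMonoid E] [Module 𝕜 E] [TopologicalSpace E]
  [AddCommMonoid F] [Module 𝕜 F] [TopologicalSpace F]

/-- `θ` is the analysis operator of the family of functionals `f`. Boundedness, and the fact that
each `(f i x)_i` lies in `ℓ^p`, are carried by the type of `θ`. -/
def IsAnalysisOperator (θ : E →L[𝕜] lp (fun _ : ι => 𝕜) p) (f : ι → E →L[𝕜] 𝕜) : Prop :=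
  ∀ (x : E) (i : ι), θ x i = f i x

/-- `θ` is the synthesis operator of the sequence of vectors `τ`. The series `∑ a n • τ n` is only
required to converge in the given order, not unconditionally. -/
def IsSynthesisOperator (θ : lp (fun _ : ℕ => 𝕜) p →L[𝕜] E) (τ : ℕ → E) : Prop :=
  ∀ a : lp (fun _ : ℕ => 𝕜) p,
    Tendsto (fun N => ∑ n ∈ Finset.range N, a n • τ n) atTop (nhds (θ a))

theorem IsAnalysisOperator.comp {θ : E →L[𝕜] lp (fun _ : ι => 𝕜) p} {f : ι → E →L[𝕜] 𝕜}
    (hθ : IsAnalysisOperator θ f) (A : F →L[𝕜] E) :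
    IsAnalysisOperator (θ.comp A) (fun i => (f i).comp A) :=
  fun x => hθ (A x)

theorem IsAnalysisOperator.add {θ η : E →L[𝕜] lp (fun _ : ι => 𝕜) p} {f g : ι → E →L[𝕜] 𝕜}
    (hθ : IsAnalysisOperator θ f) (hη : IsAnalysisOperator η g) :
    IsAnalysisOperator (θ + η) (fun i => f i + g i) :=
  fun x i => congrArg₂ (· + ·) (hθ x i) (hη x i)

theorem IsSynthesisOperator.comp {θ : lp (fun _ : ℕ => 𝕜) p →L[𝕜] E} {τ : ℕ → E}
    (hθ : IsSynthesisOperator θ τ) (C : E →L[𝕜] F) :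
    IsSynthesisOperator (C.comp θ) (fun n => C (τ n)) := fun a => by
  simpa only [Function.comp_def, map_sum, map_smul, ContinuousLinearMap.comp_apply] using
    (C.continuous.tendsto (θ a)).comp (hθ a)

theorem IsSynthesisOperator.add [ContinuousAdd E] {θ η : lp (fun _ : ℕ => 𝕜) p →L[𝕜] E}
    {τ ω : ℕ → E} (hθ : IsSynthesisOperator θ τ) (hη : IsSynthesisOperator η ω) :
    IsSynthesisOperator (θ + η) (fun n => τ n + ω n) := fun a => by
  simpa only [smul_add, Finset.sum_add_distrib, add_apply] using
    (hθ a).add (hη a)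

end AnalysisSynthesis

section Interpolation

variable {𝕜 E F G : Type*} [RCLike 𝕜] {p : ℝ≥0∞} [Fact (1 ≤ p)]
  [NormedAddCommGroup E] [NormedSpace 𝕜 E] [NormedAddCommGroup F] [NormedSpace 𝕜 F]
  [NormedAddCommGroup G] [NormedSpace 𝕜 G]

theorem orthogonal_parseval_pASF_interpolation_general
    {f : ℕ → E →L[𝕜] 𝕜} {g : ℕ → F →L[𝕜] 𝕜} {τ : ℕ → E} {ω : ℕ → F}
    {θf : E →L[𝕜] lp (fun _ : ℕ => 𝕜) p} {θg : F →L[𝕜] lp (fun _ : ℕ => 𝕜) p}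
    {θτ : lp (fun _ : ℕ => 𝕜) p →L[𝕜] E} {θω : lp (fun _ : ℕ => 𝕜) p →L[𝕜] F}
    (hθf : IsAnalysisOperator θf f) (hθg : IsAnalysisOperator θg g)
    (hθτ : IsSynthesisOperator θτ τ) (hθω : IsSynthesisOperator θω ω)
    (hPf : θτ.comp θf = ContinuousLinearMap.id 𝕜 E)
    (hPg : θω.comp θg = ContinuousLinearMap.id 𝕜 F)
    (horth₁ : θτ.comp θg = 0) (horth₂ : θω.comp θf = 0)
    {A : G →L[𝕜] E} {B : G →L[𝕜] F} {C : E →L[𝕜] G} {D : F →L[𝕜] G}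
    (hCADB : C.comp A + D.comp B = ContinuousLinearMap.id 𝕜 G) :
    IsParsevalPASF p (fun n => (f n).comp A + (g n).comp B) (fun n => C (τ n) + D (ω n)) :=
  ⟨θf.comp A + θg.comp B, C.comp θτ + D.comp θω,
    (hθf.comp A).add (hθg.comp B), (hθτ.comp C).add (hθω.comp D),
    (add_comp_add_of_orthogonal_leftInverses hPf hPg horth₁ horth₂ A B C D).trans hCADB⟩

theorem orthogonal_parseval_pASF_interpolation_smul
    {f g : ℕ → E →L[𝕜] 𝕜} {τ ω : ℕ → E}
    {θf θg : E →L[𝕜] lp (fun _ : ℕ => 𝕜) p} {θτ θω : lp (fun _ : ℕ => 𝕜) p →L[𝕜] E}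
    (hθf : IsAnalysisOperator θf f) (hθg : IsAnalysisOperator θg g)
    (hθτ : IsSynthesisOperator θτ τ) (hθω : IsSynthesisOperator θω ω)
    (hPf : θτ.comp θf = ContinuousLinearMap.id 𝕜 E)
    (hPg : θω.comp θg = ContinuousLinearMap.id 𝕜 E)
    (horth₁ : θτ.comp θg = 0) (horth₂ : θω.comp θf = 0)
    {a b c d : 𝕜} (hcadb : c * a + d * b = 1) :
    IsParsevalPASF p (fun n => a • f n + b • g n) (fun n => c • τ n + d • ω n) := by
  let homothety := algebraMap 𝕜 (E →L[𝕜] E)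
  have homothety_sum : (homothety c).comp (homothety a) + (homothety d).comp (homothety b) =
      ContinuousLinearMap.id 𝕜 E :=
    calc homothety c * homothety a + homothety d * homothety b
        = homothety (c * a + d * b) := by simp only [map_add, map_mul]
      _ = 1 := by rw [hcadb, map_one]
  simpa [homothety, Algebra.algebraMap_eq_smul_one, ContinuousLinearMap.one_def] using
    orthogonal_parseval_pASF_interpolation_general hθf hθg hθτ hθω hPf hPg horth₁ horth₂
      homothety_sum

end Interpolation

/-- **Interpolation of orthogonal Parseval p-ASFs.**  If `((f_n),(τ_n))` and `((g_n),(ω_n))` are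
orthogonal Parseval p-ASFs for `X` and `C∘A + D∘B = I_X`, then
`((f_n∘A + g_n∘B), (C τ_n + D ω_n))` is a Parseval p-ASF; in particular for scalars with
`c a + d b = 1`, `((a f_n + b g_n), (c τ_n + d ω_n))` is a Parseval p-ASF. -/
theorem orthogonal_parseval_pASF_interpolation (p : ℝ≥0∞) [Fact (1 ≤ p)] (hp : p ≠ ⊤)
    (f g : ℕ → X →L[𝕂] 𝕂) (τ ω : ℕ → X)
    (θf θg : X →L[𝕂] lp (fun _ : ℕ => 𝕂) p) (θτ θω : lp (fun _ : ℕ => 𝕂) p →L[𝕂] X)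
    (hθf : ∀ (x : X) (n : ℕ), θf x n = f n x)
    (hθg : ∀ (x : X) (n : ℕ), θg x n = g n x)
    (hθτ : ∀ a : lp (fun _ : ℕ => 𝕂) p,
      Tendsto (fun N => ∑ n ∈ Finset.range N, a n • τ n) atTop (nhds (θτ a)))
    (hθω : ∀ a : lp (fun _ : ℕ => 𝕂) p,
      Tendsto (fun N => ∑ n ∈ Finset.range N, a n • ω n) atTop (nhds (θω a)))
    (hPf : θτ.comp θf = ContinuousLinearMap.id 𝕂 X)
    (hPg : θω.comp θg = ContinuousLinearMap.id 𝕂 X)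
    (horth₁ : θτ.comp θg = 0) (horth₂ : θω.comp θf = 0) :
    (∀ A B C D : X →L[𝕂] X, C.comp A + D.comp B = ContinuousLinearMap.id 𝕂 X →
      IsParsevalPASF p (fun n => (f n).comp A + (g n).comp B)
        (fun n => C (τ n) + D (ω n))) ∧
    (∀ a b c d : 𝕂, c * a + d * b = 1 →
      IsParsevalPASF p (fun n => a • f n + b • g n) (fun n => c • τ n + d • ω n)) :=
  ⟨fun _ _ _ _ => orthogonal_parseval_pASF_interpolation_general
    hθf hθg hθτ hθω hPf hPg horth₁ horth₂,
  fun _ _ _ _ => orthogonal_parseval_pASF_interpolation_smul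
    hθf hθg hθτ hθω hPf hPg horth₁ horth₂⟩
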